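/- arXiv:2411.19395 — 5 statements merged into one kernel-verified Lean document; each statement's English description precedes it below -/
import Mathlib

section
/- Let Ω and C be finite types, P a probability mass function on Ω with P ω > 0 for all ω, Q : Ω → ℝ with Q ω ≥ 0 for all ω and ∑_ω Q ω = 1, and φ : Ω → C. Define the fiber sums P^c : C → ℝ, P^c c = ∑_{ω : φ ω = c} P ω, and Q^c : C → ℝ analogously. Then the grouped importance ratio ω ↦ Q^c(φ ω)/P^c(φ ω) has P-mean 1, and Var_P(ω ↦ Q^c(φ ω)/P^c(φ ω)) ≤ Var_P(ω ↦ Q ω / P ω). -/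
/-!
Write `w = Q / P` for the state-based ratio and `r = Q^c / P^c` for the grouped one. Then `r ∘ φ` is
the conditional expectation of `w` given `φ`: for every `g : C → ℝ`,
`E_P[(r ∘ φ) · (g ∘ φ)] = ∑ ω, Q ω * g (φ ω) = E_P[w · (g ∘ φ)]` (`sum_ratio_mul`).
Taking `g = 1` shows that both ratios have mean 1, and taking `g = r` gives the orthogonality
`E_P[r²] = E_P[w r]`, hence `E_P[w²] - E_P[r²] = E_P[(w - r)²] ≥ 0`.
-/

/-- Expectation of `f` under the weight function `P` on a finite type. -/
noncomputable def pexp {Ω : Type*} [Fintype Ω] (P f : Ω → ℝ) : ℝ :=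
  ∑ ω, P ω * f ω

/-- Variance of `f` under the weight function `P` on a finite type. -/
noncomputable def pvar {Ω : Type*} [Fintype Ω] (P f : Ω → ℝ) : ℝ :=
  pexp P (fun ω => f ω ^ 2) - (pexp P f) ^ 2

/-- Fiber sum of `h : Ω → ℝ` along `φ : Ω → C`. -/
noncomputable def fiberSum {Ω C : Type*} [Fintype Ω] [DecidableEq C]
    (φ : Ω → C) (h : Ω → ℝ) (c : C) : ℝ :=
  ∑ ω ∈ Finset.univ.filter (fun ω => φ ω = c), h ω

theorem sum_mul_comp_eq_sum_fiberSum_mul {Ω C : Type*} [Fintype Ω] [Fintype C] [DecidableEq C]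
    (φ : Ω → C) (h : Ω → ℝ) (g : C → ℝ) :
    ∑ ω, h ω * g (φ ω) = ∑ c, fiberSum φ h c * g c := by
  rw [← Finset.sum_fiberwise Finset.univ φ]
  refine Finset.sum_congr rfl fun c _ => ?_
  rw [fiberSum, Finset.sum_mul]
  refine Finset.sum_congr rfl fun ω hω => ?_
  rw [(Finset.mem_filter.mp hω).2]

/-- The division by `fiberSum φ P c` is harmless: where it is a division by zero, the fiber is
empty, so the numerator vanishes too. -/
theorem fiberSum_mul_ratio {Ω C : Type*} [Fintype Ω] [DecidableEq C]
    (P Q : Ω → ℝ) (φ : Ω → C) (hP0 : ∀ ω, 0 < P ω) (c : C) :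
    fiberSum φ P c * (fiberSum φ Q c / fiberSum φ P c) = fiberSum φ Q c := by
  rcases (Finset.univ.filter (fun ω => φ ω = c)).eq_empty_or_nonempty with he | hne
  · simp [fiberSum, he]
  · have hpos : 0 < fiberSum φ P c := Finset.sum_pos (fun ω _ => hP0 ω) hne
    exact mul_div_cancel₀ _ hpos.ne'

/-- The grouped ratio is the conditional expectation of `Q / P` given `φ`, tested against an
arbitrary function `g` of `φ`. -/
theorem sum_ratio_mul {Ω C : Type*} [Fintype Ω] [Fintype C] [DecidableEq C]
    (P Q : Ω → ℝ) (φ : Ω → C) (hP0 : ∀ ω, 0 < P ω) (g : C → ℝ) :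
    ∑ ω, P ω * (fiberSum φ Q (φ ω) / fiberSum φ P (φ ω) * g (φ ω)) = ∑ ω, Q ω * g (φ ω) := by
  rw [sum_mul_comp_eq_sum_fiberSum_mul φ P fun c => fiberSum φ Q c / fiberSum φ P c * g c,
    sum_mul_comp_eq_sum_fiberSum_mul φ Q g]
  refine Finset.sum_congr rfl fun c _ => ?_
  rw [← mul_assoc, fiberSum_mul_ratio P Q φ hP0 c]

/-- The grouped (concept-based) importance ratio has `P`-mean 1 and
variance at most that of the state-based importance ratio `Q / P`. -/
theorem concept_ratio_mean_one_and_var_le {Ω C : Type*} [Fintype Ω] [Fintype C]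
    [DecidableEq C]
    (P Q : Ω → ℝ) (φ : Ω → C)
    (hP0 : ∀ ω, 0 < P ω) (hP1 : ∑ ω, P ω = 1)
    (hQ0 : ∀ ω, 0 ≤ Q ω) (hQ1 : ∑ ω, Q ω = 1) :
    pexp P (fun ω => fiberSum φ Q (φ ω) / fiberSum φ P (φ ω)) = 1 ∧
    pvar P (fun ω => fiberSum φ Q (φ ω) / fiberSum φ P (φ ω)) ≤
      pvar P (fun ω => Q ω / P ω) := by
  have hmean : pexp P (fun ω => fiberSum φ Q (φ ω) / fiberSum φ P (φ ω)) = 1 := by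
    simpa [pexp, hQ1] using sum_ratio_mul P Q φ hP0 fun _ => 1
  have hw : pexp P (fun ω => Q ω / P ω) = 1 := by
    rw [← hQ1]
    exact Finset.sum_congr rfl fun ω _ => mul_div_cancel₀ _ (hP0 ω).ne'
  refine ⟨hmean, ?_⟩
  rw [pvar, pvar, hmean, hw]
  refine sub_le_sub_right ?_ _
  have horth := sum_ratio_mul P Q φ hP0 fun c => fiberSum φ Q c / fiberSum φ P c
  have hnonneg : 0 ≤ ∑ ω, P ω * (Q ω / P ω - fiberSum φ Q (φ ω) / fiberSum φ P (φ ω)) ^ 2 :=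
    Finset.sum_nonneg fun ω _ => mul_nonneg (hP0 ω).le (sq_nonneg _)
  have hexpand : ∑ ω, P ω * (Q ω / P ω - fiberSum φ Q (φ ω) / fiberSum φ P (φ ω)) ^ 2 =
      ∑ ω, P ω * (Q ω / P ω) ^ 2
        - 2 * ∑ ω, Q ω * (fiberSum φ Q (φ ω) / fiberSum φ P (φ ω))
        + ∑ ω, P ω * (fiberSum φ Q (φ ω) / fiberSum φ P (φ ω)
          * (fiberSum φ Q (φ ω) / fiberSum φ P (φ ω))) := by
    rw [Finset.mul_sum, ← Finset.sum_sub_distrib, ← Finset.sum_add_distrib]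
    refine Finset.sum_congr rfl fun ω _ => ?_
    have hcancel : P ω * (Q ω / P ω) = Q ω := mul_div_cancel₀ _ (hP0 ω).ne'
    linear_combination (-2 * (fiberSum φ Q (φ ω) / fiberSum φ P (φ ω))) * hcancel
  simp only [pexp, sq (fiberSum φ Q _ / fiberSum φ P _)]
  linarith
end

section
/- Let Ω and C be finite types, P a probability mass function on Ω with P ω > 0 for all ω, Q : Ω → ℝ with Q ω ≥ 0 for all ω and ∑_ω Q ω = 1, φ : Ω → C, and r : C → ℝ. With fiber sums P^c and Q^c as above, the concept-based weighted return ω ↦ (Q^c(φ ω)/P^c(φ ω)) · r(φ ω) and the state-based weighted return ω ↦ (Q ω/P ω) · r(φ ω) have the same P-mean, namely ∑_{c : C} Q^c(c) · r(c), and Var_P(ω ↦ (Q^c(φ ω)/P^c(φ ω)) · r(φ ω)) ≤ Var_P(ω ↦ (Q ω/P ω) · r(φ ω)). -/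
/-- Summing a function that factors through `φ` against the weight `h` on `Ω` is the same as
summing it against the fiber sums of `h` on `C`. -/
lemma sum_mul_comp_eq_sum_fiberSum {Ω C : Type*} [Fintype Ω] [Fintype C] [DecidableEq C]
    (φ : Ω → C) (h : Ω → ℝ) (s : C → ℝ) :
    ∑ ω, h ω * s (φ ω) = ∑ c, fiberSum φ h c * s c := by
  rw [← Finset.sum_fiberwise Finset.univ φ]
  refine Finset.sum_congr rfl fun c _ => ?_
  rw [fiberSum, Finset.sum_mul]
  refine Finset.sum_congr rfl fun ω hω => ?_
  rw [(Finset.mem_filter.mp hω).2]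

lemma pexp_ratio_mul {Ω C : Type*} [Fintype Ω] [Fintype C] [DecidableEq C]
    (P Q : Ω → ℝ) (φ : Ω → C) (hP : ∀ ω, 0 < P ω) (s : C → ℝ) :
    pexp P (fun ω => Q ω / P ω * s (φ ω)) = ∑ c, fiberSum φ Q c * s c := by
  rw [← sum_mul_comp_eq_sum_fiberSum, pexp]
  refine Finset.sum_congr rfl fun ω _ => ?_
  rw [← mul_assoc, mul_div_cancel₀ _ (hP ω).ne']

lemma pexp_fiberSum_ratio_mul {Ω C : Type*} [Fintype Ω] [Fintype C] [DecidableEq C]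
    (P Q : Ω → ℝ) (φ : Ω → C) (hP : ∀ ω, 0 < P ω) (s : C → ℝ) :
    pexp P (fun ω => fiberSum φ Q (φ ω) / fiberSum φ P (φ ω) * s (φ ω)) =
      ∑ c, fiberSum φ Q c * s c := by
  rw [pexp, sum_mul_comp_eq_sum_fiberSum φ P (fun c => fiberSum φ Q c / fiberSum φ P c * s c)]
  refine Finset.sum_congr rfl fun c _ => ?_
  -- The fiber over `c` may be empty, in which case `0 / 0 = 0` is harmless as `Q^c c = 0` too.
  rcases (Finset.univ.filter (fun ω => φ ω = c)).eq_empty_or_nonempty with hc | hc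
  · simp [fiberSum, hc]
  · have hpos : 0 < fiberSum φ P c := Finset.sum_pos (fun ω _ => hP ω) hc
    rw [← mul_assoc, mul_div_cancel₀ _ hpos.ne']

/-- If `k` is orthogonal to `f - k`, as an orthogonal projection of `f` is, then `k` has the
smaller second moment. -/
lemma pexp_sq_le_of_pexp_mul_eq {Ω : Type*} [Fintype Ω] (P f k : Ω → ℝ) (hP : ∀ ω, 0 ≤ P ω)
    (h : pexp P (fun ω => f ω * k ω) = pexp P (fun ω => k ω ^ 2)) :
    pexp P (fun ω => k ω ^ 2) ≤ pexp P (fun ω => f ω ^ 2) := by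
  have hnonneg : 0 ≤ pexp P (fun ω => (f ω - k ω) ^ 2) :=
    Finset.sum_nonneg fun ω _ => mul_nonneg (hP ω) (sq_nonneg _)
  have hexpand : pexp P (fun ω => (f ω - k ω) ^ 2) = pexp P (fun ω => f ω ^ 2)
      - 2 * pexp P (fun ω => f ω * k ω) + pexp P (fun ω => k ω ^ 2) := by
    simp only [pexp, Finset.mul_sum, ← Finset.sum_sub_distrib, ← Finset.sum_add_distrib]
    exact Finset.sum_congr rfl fun ω _ => by ring
  linarith

/-- For a concept-measurable reward `r : C → ℝ`, the concept-based
weighted return and the state-based weighted return have the same `P`-mean,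
namely `∑ c, Q^c(c) · r c`, and the concept-based one has variance at most that
of the state-based one. -/
theorem concept_weighted_return_mean_and_var_le {Ω C : Type*} [Fintype Ω]
    [Fintype C] [DecidableEq C]
    (P Q : Ω → ℝ) (φ : Ω → C) (r : C → ℝ)
    (hP0 : ∀ ω, 0 < P ω) (hP1 : ∑ ω, P ω = 1)
    (hQ0 : ∀ ω, 0 ≤ Q ω) (hQ1 : ∑ ω, Q ω = 1) :
    pexp P (fun ω => fiberSum φ Q (φ ω) / fiberSum φ P (φ ω) * r (φ ω)) =
      ∑ c : C, fiberSum φ Q c * r c ∧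
    pexp P (fun ω => Q ω / P ω * r (φ ω)) = ∑ c : C, fiberSum φ Q c * r c ∧
    pvar P (fun ω => fiberSum φ Q (φ ω) / fiberSum φ P (φ ω) * r (φ ω)) ≤
      pvar P (fun ω => Q ω / P ω * r (φ ω)) := by
  have hconcept := pexp_fiberSum_ratio_mul P Q φ hP0
  have hstate := pexp_ratio_mul P Q φ hP0
  refine ⟨hconcept r, hstate r, ?_⟩
  rw [pvar, pvar, hconcept r, hstate r]
  refine sub_le_sub_right (pexp_sq_le_of_pexp_mul_eq P _ _ (fun ω => (hP0 ω).le) ?_) _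
  -- Both sides are the integral of `r * k`, with `k` the concept-based return as a function on `C`.
  have h := (hstate fun c => r c * (fiberSum φ Q c / fiberSum φ P c * r c)).trans
    (hconcept fun c => r c * (fiberSum φ Q c / fiberSum φ P c * r c)).symm
  simpa only [sq, mul_assoc] using h
end

section
/- Let T : ℕ, X a finite type, and Ω = Fin (T+1) → X (trajectories). For each t ∈ Fin (T+1), let b_t, e_t : Ω → ℝ be such that b_t ω and e_t ω depend only on the coordinates ω 0, …, ω t (i.e., b_t ω = b_t ω' whenever ω s = ω' s for all s ≤ t, and likewise for e_t); assume b_t ω > 0, e_t ω ≥ 0, and the per-step normalizations: for every ω and every t, ∑_{x : X} b_t (Function.update ω t x) = 1 and ∑_{x : X} e_t (Function.update ω t x) = 1. Let r_t : Ω → ℝ depend only on coordinates ω 0, …, ω t, and let γ ∈ [0,1]. Define P_b ω = ∏_{t=0}^{T} b_t ω and P_e ω = ∏_{t=0}^{T} e_t ω. Then ∑_ω P_b ω · ∑_{t=0}^{T} γ^t · (∏_{t'=0}^{t} e_{t'} ω / b_{t'} ω) · r_t ω = ∑_ω P_e ω · ∑_{t=0}^{T} γ^t · r_t ω; i.e.,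 the concept-based per-decision importance sampling (CPDIS) estimator is an unbiased estimator of the evaluation-policy value. -/
/-!
By linearity it suffices to treat the reward at a single time `t`. The importance ratios turn the
factors `b t'`, `t' ≤ t`, of the trajectory probability into `e t'`, so both sides are sums of the
same prefix function `∏ t' ≤ t, e t' * r t`, weighted by the tail `∏ s > t, b s` on the left and
`∏ s > t, e s` on the right. Summing out the last coordinate first, each normalized tail factor
integrates to one. As all sums range over full trajectories, summing out a coordinate amounts to
replacing its factor by the uniform probability `1 / |X|` (`sum_mul_prod_eq`); the result is the
same for any two normalized tails.
-/

/-- Against a function not depending on coordinate `t`, a density normalized in that coordinate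
can be replaced by the uniform one. -/
theorem sum_mul_eq_sum_mul_uniform {X : Type*} [Fintype X] {T : ℕ} (t : Fin (T + 1))
    (F p : (Fin (T + 1) → X) → ℝ)
    (hF : ∀ ω x, F (Function.update ω t x) = F ω)
    (hp : ∀ ω, ∑ x : X, p (Function.update ω t x) = 1) :
    ∑ ω, F ω * p ω = ∑ ω, F ω * (Fintype.card X : ℝ)⁻¹ := by
  rcases isEmpty_or_nonempty X with hX | ⟨⟨x₀⟩⟩
  · simp
  have hc : (Fintype.card X : ℝ) ≠ 0 := by
    have : Nonempty X := ⟨x₀⟩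
    exact_mod_cast Fintype.card_ne_zero
  rw [← (Fin.insertNthEquiv (fun _ => X) t).sum_comp,
    ← (Fin.insertNthEquiv (fun _ => X) t).sum_comp, Fintype.sum_prod_type_right,
    Fintype.sum_prod_type_right]
  refine Finset.sum_congr rfl fun y _ => ?_
  have hupd : ∀ x : X, (Fin.insertNthEquiv (fun _ => X) t) (x, y)
      = Function.update (t.insertNth x₀ y : Fin (T + 1) → X) t x := by
    intro x
    simp [Fin.insertNthEquiv]
  simp only [hupd, hF]
  rw [← Finset.mul_sum, hp, Finset.sum_const, Finset.card_univ, nsmul_eq_mul]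
  field_simp

/-- Summing out the coordinates in `S`, largest first: a factor `p s` is unaffected by the later
coordinates, so each factor in turn can be replaced by the uniform density. -/
theorem sum_mul_prod_eq {X : Type*} [Fintype X] {T : ℕ}
    (p : Fin (T + 1) → (Fin (T + 1) → X) → ℝ)
    (hdep : ∀ (t : Fin (T + 1)) (ω ω' : Fin (T + 1) → X),
      (∀ s, s ≤ t → ω s = ω' s) → p t ω = p t ω')
    (hp : ∀ (ω : Fin (T + 1) → X) (t : Fin (T + 1)),
      ∑ x : X, p t (Function.update ω t x) = 1)
    (S : Finset (Fin (T + 1))) (f : (Fin (T + 1) → X) → ℝ)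
    (hf : ∀ s ∈ S, ∀ ω x, f (Function.update ω s x) = f ω) :
    ∑ ω, f ω * ∏ s ∈ S, p s ω = ∑ ω, f ω * (Fintype.card X : ℝ)⁻¹ ^ S.card := by
  induction S using Finset.induction_on_max with
  | empty => simp
  | insert a S hlt ih =>
    have ha : a ∉ S := fun h => lt_irrefl _ (hlt a h)
    have h1 := sum_mul_eq_sum_mul_uniform a (fun ω => f ω * ∏ s ∈ S, p s ω) (p a)
      (fun ω x => by
        rw [hf a (Finset.mem_insert_self a S)]
        congr 1
        refine Finset.prod_congr rfl fun s hs => hdep s _ _ fun u hu => ?_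
        exact Function.update_of_ne (hu.trans_lt (hlt s hs)).ne _ _)
      (fun ω => hp ω a)
    have h2 := ih fun s hs => hf s (Finset.mem_insert_of_mem hs)
    calc ∑ ω, f ω * ∏ s ∈ insert a S, p s ω
        = ∑ ω, (f ω * ∏ s ∈ S, p s ω) * p a ω := by
          refine Finset.sum_congr rfl fun ω _ => ?_
          rw [Finset.prod_insert ha]; ring
      _ = (∑ ω, f ω * (Fintype.card X : ℝ)⁻¹ ^ S.card) * (Fintype.card X : ℝ)⁻¹ := by
          rw [h1, ← Finset.sum_mul, h2]
      _ = _ := by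
          rw [Finset.sum_mul, Finset.card_insert_of_notMem ha]
          refine Finset.sum_congr rfl fun ω _ => ?_
          ring


/-- Unbiasedness of the concept-based per-decision importance
sampling (CPDIS) estimator.  Trajectories are `ω : Fin (T+1) → X`; the one-step
behavior/evaluation probabilities `b t`, `e t` and the reward `r t` depend only
on the prefix `ω 0, …, ω t`, and `b t`, `e t` are normalized over the `t`-th
coordinate.  Weighting the reward at time `t` by the prefix product of ratios
`e t' / b t'` (for `t' ≤ t`) gives the evaluation-policy value. -/
theorem CPDIS_unbiased {X : Type*} [Fintype X] (T : ℕ)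
    (b e : Fin (T + 1) → (Fin (T + 1) → X) → ℝ)
    (r : Fin (T + 1) → (Fin (T + 1) → X) → ℝ)
    (γ : ℝ) (hγ0 : 0 ≤ γ) (hγ1 : γ ≤ 1)
    (hbdep : ∀ (t : Fin (T + 1)) (ω ω' : Fin (T + 1) → X),
      (∀ s, s ≤ t → ω s = ω' s) → b t ω = b t ω')
    (hedep : ∀ (t : Fin (T + 1)) (ω ω' : Fin (T + 1) → X),
      (∀ s, s ≤ t → ω s = ω' s) → e t ω = e t ω')
    (hrdep : ∀ (t : Fin (T + 1)) (ω ω' : Fin (T + 1) → X),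
      (∀ s, s ≤ t → ω s = ω' s) → r t ω = r t ω')
    (hb : ∀ t ω, 0 < b t ω)
    (he : ∀ t ω, 0 ≤ e t ω)
    (hbnorm : ∀ (ω : Fin (T + 1) → X) (t : Fin (T + 1)),
      ∑ x : X, b t (Function.update ω t x) = 1)
    (henorm : ∀ (ω : Fin (T + 1) → X) (t : Fin (T + 1)),
      ∑ x : X, e t (Function.update ω t x) = 1) :
    ∑ ω : Fin (T + 1) → X, (∏ t, b t ω) *
        ∑ t : Fin (T + 1), γ ^ (t : ℕ) * (∏ t' ∈ Finset.Iic t, e t' ω / b t' ω) * r t ω =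
      ∑ ω : Fin (T + 1) → X, (∏ t, e t ω) * ∑ t : Fin (T + 1), γ ^ (t : ℕ) * r t ω := by
  have hsplit : ∀ (p : Fin (T + 1) → (Fin (T + 1) → X) → ℝ) (t : Fin (T + 1)) ω,
      ∏ s, p s ω = (∏ s ∈ Finset.Iic t, p s ω) * ∏ s ∈ Finset.Ioi t, p s ω := by
    intro p t ω
    rw [← Finset.prod_union]
    · congr 1
      ext s
      simp [le_or_gt]
    · rw [Finset.disjoint_left]
      intro s hs hs'
      simp only [Finset.mem_Iic, Finset.mem_Ioi] at hs hs'
      exact absurd hs' hs.not_gt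
  simp only [Finset.mul_sum]
  rw [Finset.sum_comm, Finset.sum_comm (s := (Finset.univ : Finset (Fin (T + 1) → X)))]
  refine Finset.sum_congr rfl fun t _ => ?_
  set f : (Fin (T + 1) → X) → ℝ :=
    fun ω => γ ^ (t : ℕ) * (∏ s ∈ Finset.Iic t, e s ω) * r t ω with hf_def
  have hf : ∀ s ∈ Finset.Ioi t, ∀ ω x, f (Function.update ω s x) = f ω := by
    intro s hs ω x
    have hagree : ∀ u, u ≤ t → Function.update ω s x u = ω u := fun u hu =>
      Function.update_of_ne (hu.trans_lt (Finset.mem_Ioi.1 hs)).ne _ _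
    simp only [hf_def]
    rw [hrdep t _ _ hagree]
    congr 2
    exact Finset.prod_congr rfl fun v hv =>
      hedep v _ _ fun u hu => hagree u (hu.trans (Finset.mem_Iic.1 hv))
  trans ∑ ω, f ω * ∏ s ∈ Finset.Ioi t, b s ω
  · refine Finset.sum_congr rfl fun ω _ => ?_
    have hne : ∏ s ∈ Finset.Iic t, b s ω ≠ 0 :=
      Finset.prod_ne_zero_iff.2 fun s _ => (hb s ω).ne'
    rw [hsplit b t ω, Finset.prod_div_distrib]
    simp only [hf_def]
    field_simp
  rw [sum_mul_prod_eq b hbdep hbnorm _ f hf, ← sum_mul_prod_eq e hedep henorm _ f hf]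
  refine Finset.sum_congr rfl fun ω _ => ?_
  rw [hsplit e t ω]
  simp only [hf_def]
  ring
end

section
/- Let Ω be a finite type with a probability mass function P, T : ℕ, γ ∈ [0,1], R_max ≥ 0, and U ≥ 1. For each t ∈ {0,…,T}, let ρ_t : Ω → ℝ with 0 ≤ ρ_t ω ≤ U^{t+1} for all ω, and let r_t : Ω → ℝ with |r_t ω| ≤ R_max for all ω. Then Var_P(ω ↦ ∑_{t=0}^{T} γ^t · ρ_t ω · r_t ω) ≤ (T+1)² · R_max² · U^{2(T+1)}. -/
theorem pvar_le_sq_of_abs_le {Ω : Type*} [Fintype Ω] (P f : Ω → ℝ) (B : ℝ)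
    (hP0 : ∀ ω, 0 ≤ P ω) (hP1 : ∑ ω, P ω = 1) (hf : ∀ ω, |f ω| ≤ B) :
    pvar P f ≤ B ^ 2 := by
  have h : ∑ ω, P ω * f ω ^ 2 ≤ ∑ ω, P ω * B ^ 2 :=
    Finset.sum_le_sum fun ω _ => mul_le_mul_of_nonneg_left
      (sq_le_sq' (abs_le.mp (hf ω)).1 (abs_le.mp (hf ω)).2) (hP0 ω)
  rw [← Finset.sum_mul, hP1, one_mul] at h
  unfold pvar
  have h2 := sq_nonneg (pexp P f)
  have h3 : pexp P (fun ω => f ω ^ 2) ≤ B ^ 2 := h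
  linarith

/-- Variance upper bound for the concept-based (per-decision)
IS estimator: if the prefix ratio at time `t` is bounded by
`U^(t+1)` and rewards are bounded by `R_max`, then the variance of the
discounted weighted return is at most `(T+1)² · R_max² · U^(2(T+1))`. -/
theorem CPDIS_var_upper_bound {Ω : Type*} [Fintype Ω] (P : Ω → ℝ)
    (hP0 : ∀ ω, 0 ≤ P ω) (hP1 : ∑ ω, P ω = 1)
    (T : ℕ) (γ Rmax U : ℝ)
    (hγ0 : 0 ≤ γ) (hγ1 : γ ≤ 1) (hR : 0 ≤ Rmax) (hU : 1 ≤ U)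
    (ρ r : Fin (T + 1) → Ω → ℝ)
    (hρ0 : ∀ t ω, 0 ≤ ρ t ω)
    (hρU : ∀ t ω, ρ t ω ≤ U ^ ((t : ℕ) + 1))
    (hr : ∀ t ω, |r t ω| ≤ Rmax) :
    pvar P (fun ω => ∑ t : Fin (T + 1), γ ^ (t : ℕ) * ρ t ω * r t ω) ≤
      (T + 1 : ℝ) ^ 2 * Rmax ^ 2 * U ^ (2 * (T + 1)) := by
  have key : ∀ ω, |∑ t : Fin (T + 1), γ ^ (t : ℕ) * ρ t ω * r t ω| ≤
      (T + 1 : ℝ) * (Rmax * U ^ (T + 1)) := by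
    intro ω
    have hterm : ∀ t : Fin (T + 1),
        |γ ^ (t : ℕ) * ρ t ω * r t ω| ≤ Rmax * U ^ (T + 1) := by
      intro t
      have h1 : γ ^ (t : ℕ) ≤ 1 := pow_le_one₀ hγ0 hγ1
      have h2 : ρ t ω ≤ U ^ (T + 1) :=
        (hρU t ω).trans (pow_le_pow_right₀ hU t.isLt)
      rw [abs_mul, abs_mul, abs_of_nonneg (pow_nonneg hγ0 _), abs_of_nonneg (hρ0 t ω)]
      calc γ ^ (t : ℕ) * ρ t ω * |r t ω| ≤ 1 * U ^ (T + 1) * Rmax := by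
            have := hρ0 t ω
            have := hr t ω
            gcongr
        _ = Rmax * U ^ (T + 1) := by ring
    calc |∑ t : Fin (T + 1), γ ^ (t : ℕ) * ρ t ω * r t ω|
        ≤ ∑ t : Fin (T + 1), |γ ^ (t : ℕ) * ρ t ω * r t ω| := Finset.abs_sum_le_sum_abs _ _
      _ ≤ ∑ _t : Fin (T + 1), Rmax * U ^ (T + 1) := Finset.sum_le_sum fun t _ => hterm t
      _ = (T + 1 : ℝ) * (Rmax * U ^ (T + 1)) := by simp
  refine (pvar_le_sq_of_abs_le P _ _ hP0 hP1 key).trans_eq ?_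
  ring
end

section
/- Let Ω be a finite type, P a probability mass function on Ω with P ω > 0 for all ω, and Q : Ω → ℝ with Q ω ≥ 0 for all ω and ∑_ω Q ω = 1; set ρ ω = Q ω / P ω. Let n : ℕ, and for each t ∈ Fin n let X_t : Ω → 𝒳_t be a function into a finite type 𝒳_t and r_t : 𝒳_t → ℝ. Define Y_t ω = ρ ω · r_t(X_t ω) and the marginalized importance sampling terms g_t ω = (Q_{X_t}(X_t ω) / P_{X_t}(X_t ω)) · r_t(X_t ω), where P_{X_t}(x) = ∑_{ω : X_t ω = x} P ω and Q_{X_t}(x) = ∑_{ω : X_t ω = x} Q ω. Then each g_t equals the P-conditional expectation of Y_t given X_t (i.e., for every ω, g_t ω = (∑_{ω' : X_t ω' = X_t ω} P ω' · Y_t ω') / (∑_{ω' : X_t ω' = X_t ω} P ω')), and Var_P(∑_t Y_t) − Var_P(∑_t g_t) ≥ 2 ∑_{t<k} (E_P[Y_t · Y_k] − E_P[g_t · g_k]). -/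
/-- Tower property for the marginal density ratio. Positivity of `P` is what makes the fibre
weight in the denominator vanish only on empty fibres, where the division by zero is harmless. -/
lemma pexp_marginal_ratio {Ω α : Type*} [Fintype Ω] [Fintype α] [DecidableEq α]
    (P Q : Ω → ℝ) (hP : ∀ ω, 0 < P ω) (X : Ω → α) (ψ : α → ℝ) :
    pexp P (fun ω => (∑ ω' ∈ Finset.univ.filter (fun ω' => X ω' = X ω), Q ω') /
        (∑ ω' ∈ Finset.univ.filter (fun ω' => X ω' = X ω), P ω') * ψ (X ω)) =
      pexp P (fun ω => Q ω / P ω * ψ (X ω)) := by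
  unfold pexp
  rw [← Finset.sum_fiberwise Finset.univ X, ← Finset.sum_fiberwise Finset.univ X
    (fun ω => P ω * (Q ω / P ω * ψ (X ω)))]
  refine Finset.sum_congr rfl fun x _ => ?_
  have hR : ∑ ω ∈ Finset.univ.filter (fun ω => X ω = x), P ω * (Q ω / P ω * ψ (X ω)) =
      (∑ ω ∈ Finset.univ.filter (fun ω => X ω = x), Q ω) * ψ x := by
    rw [Finset.sum_mul]
    refine Finset.sum_congr rfl fun ω hω => ?_
    rw [(Finset.mem_filter.1 hω).2, ← mul_assoc, mul_div_cancel₀ _ (hP ω).ne']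
  have hL : ∑ ω ∈ Finset.univ.filter (fun ω => X ω = x),
        P ω * ((∑ ω' ∈ Finset.univ.filter (fun ω' => X ω' = X ω), Q ω') /
          (∑ ω' ∈ Finset.univ.filter (fun ω' => X ω' = X ω), P ω') * ψ (X ω)) =
      (∑ ω ∈ Finset.univ.filter (fun ω => X ω = x), P ω) *
        ((∑ ω' ∈ Finset.univ.filter (fun ω' => X ω' = x), Q ω') /
          (∑ ω' ∈ Finset.univ.filter (fun ω' => X ω' = x), P ω') * ψ x) := by
    rw [Finset.sum_mul]
    refine Finset.sum_congr rfl fun ω hω => ?_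
    rw [(Finset.mem_filter.1 hω).2]
  rw [hL, hR]
  rcases (Finset.univ.filter (fun ω => X ω = x)).eq_empty_or_nonempty with h | h
  · simp [h]
  · rw [← mul_assoc, mul_div_cancel₀ _ (Finset.sum_pos (fun ω _ => hP ω) h).ne']

/-- Conditional expectation contracts the second moment. -/
lemma pexp_sq_marginal_le {Ω α : Type*} [Fintype Ω] [Fintype α] [DecidableEq α]
    (P Q : Ω → ℝ) (hP : ∀ ω, 0 < P ω) (X : Ω → α) (r : α → ℝ) :
    pexp P (fun ω =>
        ((∑ ω' ∈ Finset.univ.filter (fun ω' => X ω' = X ω), Q ω') /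
          (∑ ω' ∈ Finset.univ.filter (fun ω' => X ω' = X ω), P ω') * r (X ω)) *
        ((∑ ω' ∈ Finset.univ.filter (fun ω' => X ω' = X ω), Q ω') /
          (∑ ω' ∈ Finset.univ.filter (fun ω' => X ω' = X ω), P ω') * r (X ω))) ≤
      pexp P (fun ω => (Q ω / P ω * r (X ω)) * (Q ω / P ω * r (X ω))) := by
  set φ : α → ℝ := fun x => (∑ ω' ∈ Finset.univ.filter (fun ω' => X ω' = x), Q ω') /
    (∑ ω' ∈ Finset.univ.filter (fun ω' => X ω' = x), P ω') * r x with hφ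
  -- With `Y = ρ · r(X)` and `g = φ(X)`, the tower property at `ψ = r * φ` is `E[g²] = E[Y g]`.
  have h := pexp_marginal_ratio P Q hP X (fun x => r x * φ x)
  simp only [← mul_assoc] at h
  have hg : pexp P (fun ω => φ (X ω) * φ (X ω)) =
      pexp P (fun ω => Q ω / P ω * r (X ω) * φ (X ω)) := h
  change pexp P (fun ω => φ (X ω) * φ (X ω)) ≤ _
  -- Hence `E[Y²] - E[g²] = E[(Y - g)²]`.
  have h0 : 0 ≤ pexp P (fun ω => (Q ω / P ω * r (X ω) - φ (X ω)) ^ 2) :=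
    Finset.sum_nonneg fun ω _ => mul_nonneg (hP ω).le (sq_nonneg _)
  have he : pexp P (fun ω => (Q ω / P ω * r (X ω) - φ (X ω)) ^ 2) =
      pexp P (fun ω => (Q ω / P ω * r (X ω)) * (Q ω / P ω * r (X ω))) -
        2 * pexp P (fun ω => Q ω / P ω * r (X ω) * φ (X ω)) +
        pexp P (fun ω => φ (X ω) * φ (X ω)) := by
    unfold pexp
    rw [Finset.mul_sum, ← Finset.sum_sub_distrib, ← Finset.sum_add_distrib]
    exact Finset.sum_congr rfl fun ω _ => by ring
  linarith

lemma pexp_sum {Ω ι : Type*} [Fintype Ω] [Fintype ι] (P : Ω → ℝ) (f : ι → Ω → ℝ) :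
    pexp P (fun ω => ∑ t, f t ω) = ∑ t, pexp P (f t) := by
  unfold pexp
  simp only [Finset.mul_sum]
  exact Finset.sum_comm

lemma sum_sum_eq_diag_add {n : ℕ} (M : Fin n → Fin n → ℝ) (hM : ∀ t k, M t k = M k t) :
    ∑ k, ∑ t, M t k = ∑ k, M k k + 2 * ∑ k, ∑ t ∈ Finset.Iio k, M t k := by
  have hsplit : ∀ k, ∑ t, M t k =
      M k k + ∑ t ∈ Finset.Iio k, M t k + ∑ t ∈ Finset.Ioi k, M t k := by
    intro k
    have h1 : ∑ t ∈ Finset.Iio k, M t k = ∑ t, if t < k then M t k else 0 := by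
      rw [← Finset.sum_filter]; congr 1; ext; simp
    have h2 : ∑ t ∈ Finset.Ioi k, M t k = ∑ t, if k < t then M t k else 0 := by
      rw [← Finset.sum_filter]; congr 1; ext; simp
    have h3 : M k k = ∑ t, if t = k then M t k else 0 := by simp
    rw [h1, h2, h3, ← Finset.sum_add_distrib, ← Finset.sum_add_distrib]
    refine Finset.sum_congr rfl fun t _ => ?_
    rcases lt_trichotomy t k with h | h | h
    · simp [h, h.ne, h.asymm]
    · simp [h]
    · simp [h, h.ne', h.asymm]
  have hswap : ∑ k, ∑ t ∈ Finset.Ioi k, M t k = ∑ k, ∑ t ∈ Finset.Iio k, M t k := by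
    rw [Finset.sum_comm' (t' := Finset.univ) (s' := fun t => Finset.Iio t) (by simp)]
    exact Finset.sum_congr rfl fun _ _ => Finset.sum_congr rfl fun _ _ => hM _ _
  simp only [hsplit, Finset.sum_add_distrib, hswap]
  ring

lemma pexp_sq_sum {Ω : Type*} [Fintype Ω] {n : ℕ} (P : Ω → ℝ) (f : Fin n → Ω → ℝ) :
    pexp P (fun ω => (∑ t, f t ω) ^ 2) = ∑ k, pexp P (fun ω => f k ω * f k ω) +
      2 * ∑ k, ∑ t ∈ Finset.Iio k, pexp P (fun ω => f t ω * f k ω) := by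
  rw [← sum_sum_eq_diag_add (fun t k => pexp P (fun ω => f t ω * f k ω))
    (fun t k => by simp only [mul_comm])]
  simp only [← pexp_sum]
  congr 1
  funext ω
  rw [sq, Finset.sum_mul_sum, Finset.sum_comm]

/-- With `Y t ω = ρ ω · r t (X t ω)` (importance sampling terms)
and `g t ω = (Q_{X t}(X t ω) / P_{X t}(X t ω)) · r t (X t ω)` (marginalized
IS terms), each `g t` is the `P`-conditional expectation of
`Y t` given `X t`, and the variance gap between `∑ t, Y t` and `∑ t, g t` is at
least twice the sum over `t < k` of the cross-moment gaps. -/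
theorem MIS_terms_are_cond_exp_and_var_gap {Ω : Type*} [Fintype Ω]
    (P Q : Ω → ℝ)
    (hP0 : ∀ ω, 0 < P ω) (hP1 : ∑ ω, P ω = 1)
    (hQ0 : ∀ ω, 0 ≤ Q ω) (hQ1 : ∑ ω, Q ω = 1)
    (n : ℕ) (𝒳 : Fin n → Type*) [∀ t, Fintype (𝒳 t)] [∀ t, DecidableEq (𝒳 t)]
    (X : ∀ t : Fin n, Ω → 𝒳 t) (r : ∀ t : Fin n, 𝒳 t → ℝ) :
    (∀ (t : Fin n) (ω : Ω),
      (∑ ω' ∈ Finset.univ.filter (fun ω' => X t ω' = X t ω), Q ω') /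
          (∑ ω' ∈ Finset.univ.filter (fun ω' => X t ω' = X t ω), P ω') *
          r t (X t ω) =
        (∑ ω' ∈ Finset.univ.filter (fun ω' => X t ω' = X t ω),
            P ω' * (Q ω' / P ω' * r t (X t ω'))) /
          (∑ ω' ∈ Finset.univ.filter (fun ω' => X t ω' = X t ω), P ω')) ∧
    pvar P (fun ω => ∑ t, Q ω / P ω * r t (X t ω)) -
        pvar P (fun ω => ∑ t,
          (∑ ω' ∈ Finset.univ.filter (fun ω' => X t ω' = X t ω), Q ω') /
            (∑ ω' ∈ Finset.univ.filter (fun ω' => X t ω' = X t ω), P ω') *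
            r t (X t ω)) ≥
      2 * ∑ k : Fin n, ∑ t ∈ Finset.Iio k,
        (pexp P (fun ω => (Q ω / P ω * r t (X t ω)) * (Q ω / P ω * r k (X k ω))) -
          pexp P (fun ω =>
            ((∑ ω' ∈ Finset.univ.filter (fun ω' => X t ω' = X t ω), Q ω') /
              (∑ ω' ∈ Finset.univ.filter (fun ω' => X t ω' = X t ω), P ω') *
              r t (X t ω)) *
            ((∑ ω' ∈ Finset.univ.filter (fun ω' => X k ω' = X k ω), Q ω') /
              (∑ ω' ∈ Finset.univ.filter (fun ω' => X k ω' = X k ω), P ω') *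
              r k (X k ω)))) := by
  constructor
  · intro t ω
    rw [div_mul_eq_mul_div, Finset.sum_mul]
    congr 1
    refine Finset.sum_congr rfl fun ω' hω' => ?_
    rw [(Finset.mem_filter.1 hω').2, ← mul_assoc, mul_div_cancel₀ _ (hP0 ω').ne']
  · have hmean := Finset.sum_congr (rfl : (Finset.univ : Finset (Fin n)) = Finset.univ)
      fun t _ => pexp_marginal_ratio P Q hP0 (X t) (r t)
    have hdiag := Finset.sum_le_sum fun t (_ : t ∈ (Finset.univ : Finset (Fin n))) =>
      pexp_sq_marginal_le P Q hP0 (X t) (r t)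
    unfold pvar
    rw [pexp_sq_sum, pexp_sq_sum, pexp_sum, pexp_sum, hmean]
    simp only [Finset.sum_sub_distrib]
    linarith
end
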